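/- Let C be a nonempty, closed, convex subset of ℝⁿ, let F : ℝⁿ → ℝᵐ be continuously differentiable, and let K be a point-to-cone mapping with closed graph such that each K(x) is a closed, pointed, convex cone with nonempty interior. Assume F is K-convex on C and satisfies the gradient inclusion F(x) − F(x̄) ∈ J_F(x̄)(x − x̄) + K(x̄) for all x, x̄ ∈ C. Then a point x* ∈ C is a weak solution of the problem K-min F(x) subject to x ∈ C if and only if x* is a stationary point. -/

import Mathlib

open scoped Pointwise RealInnerProductSpace

/-!
If `J d ∈ -int K(x*)` for a feasible direction `d`, the difference quotients
`t⁻¹ (F (x* + t d) - F x*)` converge to `J d`, so they lie in the open set `-int K(x*)` for small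
`t > 0`; since `int K(x*)` is stable under positive scaling and `x* + t d ∈ C` by convexity,
`x*` is not a weak solution. Conversely, if `F x - F x* ∈ -int K(x*)`, the gradient inclusion and
`int K + K ⊆ int K` give `J (x - x*) ∈ -int K(x*)`, so `x*` is not stationary.
-/

theorem smul_mem_interior_of_cone {E : Type*} [NormedAddCommGroup E] [NormedSpace ℝ E]
    {S : Set E} (hcone : ∀ c : ℝ, 0 ≤ c → ∀ y ∈ S, c • y ∈ S) {c : ℝ} (hc : 0 < c) {y : E}
    (hy : y ∈ interior S) : c • y ∈ interior S := by
  have hsub : c • S ⊆ S := by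
    rintro _ ⟨z, hz, rfl⟩
    exact hcone c hc.le z hz
  apply interior_mono hsub
  rw [interior_smul₀ hc.ne']
  exact Set.smul_mem_smul_set hy

theorem add_mem_interior_of_cone {E : Type*} [NormedAddCommGroup E] [NormedSpace ℝ E]
    {S : Set E} (hcone : ∀ c : ℝ, 0 ≤ c → ∀ y ∈ S, c • y ∈ S) (hconv : Convex ℝ S) {y k : E}
    (hy : y ∈ interior S) (hk : k ∈ S) : y + k ∈ interior S := by
  have h : (1 / 2 : ℝ) • y + (1 / 2 : ℝ) • k ∈ interior S :=
    hconv.combo_interior_self_mem_interior hy hk (by norm_num) (by norm_num) (by norm_num)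
  have h2 := smul_mem_interior_of_cone hcone (c := 2) (by norm_num) h
  rwa [← smul_add, smul_smul, show (2 : ℝ) * (1 / 2) = 1 by norm_num, one_smul] at h2

/-- For a `K`-convex continuously differentiable `F` (with the
gradient inclusion) on a nonempty closed convex set `C`, where `K` is a
closed-graph point-to-cone mapping with closed pointed convex values having
nonempty interior, `x* ∈ C` is a weak solution iff it is a stationary point. -/
theorem stmt_1 {n m : ℕ}
    (C : Set (EuclideanSpace ℝ (Fin n)))
    (hCne : C.Nonempty) (hCcl : IsClosed C) (hCconv : Convex ℝ C)
    (F : EuclideanSpace ℝ (Fin n) → EuclideanSpace ℝ (Fin m))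
    (hF : ContDiff ℝ 1 F)
    (K : EuclideanSpace ℝ (Fin n) → Set (EuclideanSpace ℝ (Fin m)))
    (hKcl : ∀ x, IsClosed (K x))
    (hKcone : ∀ x, ∀ c : ℝ, 0 ≤ c → ∀ y ∈ K x, c • y ∈ K x)
    (hKconv : ∀ x, Convex ℝ (K x))
    (hKpointed : ∀ x, ∀ y, y ∈ K x → -y ∈ K x → y = 0)
    (hKint : ∀ x, (interior (K x)).Nonempty)
    (hGraph : IsClosed {p : EuclideanSpace ℝ (Fin n) × EuclideanSpace ℝ (Fin m) |
      p.2 ∈ K p.1})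
    (hKconvexF : ∀ lam : ℝ, lam ∈ Set.Icc (0 : ℝ) 1 → ∀ x ∈ C, ∀ xb ∈ C,
      ∃ k ∈ K (lam • x + (1 - lam) • xb),
        F (lam • x + (1 - lam) • xb) = lam • F x + (1 - lam) • F xb - k)
    (hGradIncl : ∀ x ∈ C, ∀ xb ∈ C,
      F x - F xb - fderiv ℝ F xb (x - xb) ∈ K xb)
    (xs : EuclideanSpace ℝ (Fin n)) (hxs : xs ∈ C) :
    (∀ x ∈ C, F x - F xs ∉ -interior (K xs)) ↔
      (∀ d : EuclideanSpace ℝ (Fin n), xs + d ∈ C →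
        fderiv ℝ F xs d ∉ -interior (K xs)) := by
  constructor
  · intro hweak d hd hJ
    have hlim := ((hF.differentiable one_ne_zero xs).hasFDerivAt.hasLineDerivAt
      d).tendsto_slope_zero_right
    have hev := hlim.eventually (isOpen_interior.neg.mem_nhds hJ)
    have hIoc : Set.Ioc (0 : ℝ) 1 ∈ nhdsWithin 0 (Set.Ioi 0) := Ioc_mem_nhdsGT one_pos
    obtain ⟨t, ht, ht0, ht1⟩ := (hev.and hIoc).exists
    apply hweak (xs + t • d) (hCconv.add_smul_mem hxs hd ⟨ht0.le, ht1⟩)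
    have h := smul_mem_interior_of_cone (hKcone xs) ht0 (Set.mem_neg.mp ht)
    rwa [smul_neg, smul_smul, mul_inv_cancel₀ ht0.ne', one_smul] at h
  · intro hstat x hx hFx
    apply hstat (x - xs) (by simpa using hx)
    have h := add_mem_interior_of_cone (hKcone xs) (hKconv xs) (Set.mem_neg.mp hFx)
      (hGradIncl x hx xs hxs)
    rw [Set.mem_neg]
    convert h using 1
    abel
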